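/- arXiv:1707.01151 — 2 statements merged into one kernel-verified Lean document; each statement's English description precedes it below -/
import Mathlib

section
/- Let (P, λ) ∈ P_d × (0,1) be such that T_{P,λ} has no singular connections. Then there exists ε > 0 such that the number of itineraries satisfies lim_{n→∞} (1/n) · log #I_n^ε(P,λ) = 0, where I_n^ε(P,λ) is formed with (P,λ) as the base point of the neighbourhood Δ_ε(P,λ). -/
open MeasureTheory Set Filter Metric

noncomputable section

/-- Planar cross product of two complex numbers viewed as vectors of `ℝ²`. -/
def cross (z w : ℂ) : ℝ := z.re * w.im - z.im * w.re

/-- `v` is the tuple of vertices of a convex `d`-gon, cyclically ordered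
(counterclockwise): every vertex lies strictly to the left of every directed edge. -/
def IsConvexPolygon {d : ℕ} [NeZero d] (v : Fin d → ℂ) : Prop :=
  ∀ i j : Fin d, j ≠ i → j ≠ i + 1 → 0 < cross (v (i + 1) - v i) (v j - v i)

/-- The polygon `P`, as a subset of the plane. -/
def polygonSet {d : ℕ} (v : Fin d → ℂ) : Set ℂ := convexHull ℝ (Set.range v)

/-- The open cone `A k`: points `z` outside `P` whose supporting line (oriented from `z`
towards the polygon, with the interior of `P` on its left) meets `P` exactly at the
vertex `v k`. -/
def cone {d : ℕ} (v : Fin d → ℂ) (k : Fin d) : Set ℂ :=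
  {z | ∀ j : Fin d, j ≠ k → 0 < cross (v k - z) (v j - z)}

/-- The singular set `S_P`: the points of `X = ℂ \ P` lying in no cone, i.e. whose
supporting line contains an edge of the polygon. -/
def singSet {d : ℕ} (v : Fin d → ℂ) : Set ℂ :=
  {z | z ∉ polygonSet v ∧ ∀ k : Fin d, z ∉ cone v k}

/-- The outer billiard map of the polygon with vertices `v` with contraction `lam`:
on the cone `A k` it is `z ↦ -lam • z + (1+lam) • v k` (extended arbitrarily outside
the union of the cones, which is its actual domain `X \ S_P`). -/
def billiardMap {d : ℕ} (v : Fin d → ℂ) (lam : ℝ) (z : ℂ) : ℂ :=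
  haveI := Classical.propDecidable (∃ k : Fin d, z ∈ cone v k)
  if h : ∃ k : Fin d, z ∈ cone v k then -(lam : ℂ) * z + (1 + (lam : ℂ)) * v h.choose
  else z

/-- A point is non-singular if its whole forward orbit stays in the union of the open
cones, i.e. never meets the singular set. -/
def NonSingular {d : ℕ} (v : Fin d → ℂ) (lam : ℝ) (z : ℂ) : Prop :=
  ∀ n : ℕ, (billiardMap v lam)^[n] z ∈ ⋃ k : Fin d, cone v k

/-- The ω-limit set of the forward orbit of `z` under `f`. -/
def omegaSet (f : ℂ → ℂ) (z : ℂ) : Set ℂ :=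
  ⋂ m : ℕ, closure ((fun n : ℕ => f^[n] z) '' {n | m ≤ n})

/-- The outer billiard map with contraction is asymptotically periodic: it has finitely
many periodic orbits (equivalently, periodic points) and the ω-limit set of every
non-singular point is a periodic orbit. -/
def AsymptoticallyPeriodic {d : ℕ} (v : Fin d → ℂ) (lam : ℝ) : Prop :=
  {z : ℂ | NonSingular v lam z ∧ ∃ p : ℕ, 1 ≤ p ∧ (billiardMap v lam)^[p] z = z}.Finite ∧
  ∀ z : ℂ, NonSingular v lam z → ∃ w : ℂ, NonSingular v lam w ∧
    (∃ p : ℕ, 1 ≤ p ∧ (billiardMap v lam)^[p] w = w) ∧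
    omegaSet (billiardMap v lam) z = Set.range fun n : ℕ => (billiardMap v lam)^[n] w

/-- The `ε`-neighbourhood `Δ_ε = B_ε(P') × (λ'-ε, λ'+ε)` of `(P', λ')`. -/
def Delta {d : ℕ} (v' : Fin d → ℂ) (l' ε : ℝ) : Set ((Fin d → ℂ) × ℝ) :=
  Metric.ball v' ε ×ˢ Set.Ioo (l' - ε) (l' + ε)

/-- `a_ε = λ' + ε`. -/
def aEps (l' ε : ℝ) : ℝ := l' + ε

/-- `b_ε = sup {‖P‖ : P ∈ B_ε(P')}` (sup-norm of the vertex tuple). -/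
def bEps {d : ℕ} (v' : Fin d → ℂ) (ε : ℝ) : ℝ :=
  sSup ((fun w : Fin d → ℂ => ‖w‖) '' Metric.ball v' ε)

/-- `r_ε = b_ε (1+a_ε)/(1-a_ε)²`. -/
def rEps {d : ℕ} (v' : Fin d → ℂ) (l' ε : ℝ) : ℝ :=
  bEps v' ε * (1 + aEps l' ε) / (1 - aEps l' ε) ^ 2

/-- `K_ε`: the closed disc of radius `r_ε` centred at the origin. -/
def Keps {d : ℕ} (v' : Fin d → ℂ) (l' ε : ℝ) : Set ℂ :=
  Metric.closedBall (0 : ℂ) (rEps v' l' ε)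

/-- `(i 0, …, i (n-1))` is an admissible itinerary of order `n` of `T_{w,lam}`, the
cones being restricted to `K_ε`: the corresponding intersection
`A_{i_0} ∩ T⁻¹(A_{i_1}) ∩ ⋯ ∩ T^{-(n-1)}(A_{i_{n-1}})` is non-empty. -/
def Admissible {d : ℕ} (v' : Fin d → ℂ) (l' ε : ℝ) (w : Fin d → ℂ) (lam : ℝ)
    {n : ℕ} (i : Fin n → Fin d) : Prop :=
  ∃ z : ℂ, ∀ j : Fin n, (billiardMap w lam)^[(j : ℕ)] z ∈ cone w (i j) ∩ Keps v' l' ε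

/-- `I_n^ε`: the itineraries of order `n` admissible for some `(P, λ) ∈ Δ_ε`. -/
def ItinSet {d : ℕ} (v' : Fin d → ℂ) (l' ε : ℝ) (n : ℕ) : Set (Fin n → Fin d) :=
  {i | ∃ q ∈ Delta v' l' ε, Admissible v' l' ε q.1 q.2 i}

/-- `H(P, λ, i) = (1+λ) ∑_{j=0}^{n-1} (-λ)^{n-j-1} v_{i_j}`. -/
def Hpt {d : ℕ} (w : Fin d → ℂ) (lam : ℝ) {n : ℕ} (i : Fin n → Fin d) : ℂ :=
  (1 + (lam : ℂ)) * ∑ j : Fin n, (-(lam : ℂ)) ^ (n - (j : ℕ) - 1) * w (i j)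

/-- The limit set `Λ_ε(P,λ) = ⋂_{m ≥ 1} closure (⋃_{n ≥ m} {H(P,λ,i) : i ∈ I_n^ε})`. -/
def LamSet {d : ℕ} (v' : Fin d → ℂ) (l' ε : ℝ) (w : Fin d → ℂ) (lam : ℝ) : Set ℂ :=
  ⋂ m : ℕ, ⋂ (_ : 1 ≤ m),
    closure {z : ℂ | ∃ n : ℕ, m ≤ n ∧ ∃ i ∈ ItinSet v' l' ε n, Hpt w lam i = z}

/-- `ω(P,λ)`: the union of the ω-limit sets of all non-singular points. -/
def omegaUnion {d : ℕ} (w : Fin d → ℂ) (lam : ℝ) : Set ℂ :=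
  ⋃ z : ℂ, ⋃ (_ : NonSingular w lam z), omegaSet (billiardMap w lam) z

/-- `T_{P,λ}` has a singular connection of some order `n ≥ 2`: there is an orbit segment
`x = x_1, …, x_n = T^{n-1}(x)` with `x_1, …, x_{n-1} ∉ S_P`, `x_n ∈ S_P`, and such that
the segment `[x_1, x_n]` contains a side of the polygon. -/
def HasSingularConnection {d : ℕ} [NeZero d] (v : Fin d → ℂ) (lam : ℝ) : Prop :=
  ∃ n : ℕ, 2 ≤ n ∧ ∃ x : ℂ,
    (∀ m : ℕ, m < n - 1 → (billiardMap v lam)^[m] x ∈ ⋃ k : Fin d, cone v k) ∧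
    (billiardMap v lam)^[n - 1] x ∈ singSet v ∧
    ∃ k : Fin d, segment ℝ (v k) (v (k + 1)) ⊆ segment ℝ x ((billiardMap v lam)^[n - 1] x)

/-!
Take as coordinates of `z` the oriented areas of the triangles spanned by `z` and two vertices.
Their signs tell in which cone `z` lies, and the outer billiard map becomes multiplication by `-λ`
followed by a translation that depends only on the signs.

Consider the times at which the sign of a coordinate is not determined by the earlier itinerary.
From one such time to the next, the coordinate is multiplied by a power of `-λ` and then moved by a
drift that is a function of the letters in between; by default its new sign is opposite to that of
the drift. The exceptions are rare: they confine the coordinate to the interval between `0` and the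
drift, so any two orbits sharing the exception differ by less than the drift from then on, which
rules out a second exception with the same letters. An itinerary of length `n` can thus be
recovered from about `n / N` letters at isolated times and a number of exceptional letters that
depends only on `N`.

The resulting subexponential bound is uniform in the system. It passes to the union over all
systems, because a system enters only through its set of words of a fixed length, for which there
are finitely many choices.
-/

open SignType (sign)

section OrderedField

variable {K : Type*} [Field K] [LinearOrder K] [IsStrictOrderedRing K] {u v f : K}

lemma sign_add_eq_right_of_abs_lt (h : |u| < |f|) : sign (u + f) = sign f := by
  obtain ⟨hneg, hpos⟩ := abs_lt.1 h
  rcases lt_trichotomy f 0 with hf | rfl | hf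
  · rw [abs_of_neg hf] at hpos
    rw [sign_neg hf, sign_neg (by linarith)]
  · exact absurd h (by simp)
  · rw [abs_of_pos hf] at hneg
    rw [sign_pos hf, sign_pos (by linarith)]

lemma sign_add_eq_right_of_div_nonneg (hf : f ≠ 0) (h : 0 ≤ u / f) :
    sign (u + f) = sign f := by
  have hfactor : u + f = (u / f + 1) * f := by field_simp
  rw [hfactor, sign_mul, sign_pos (by positivity), one_mul]

lemma abs_le_abs_sub_of_sign_ne (h : sign v ≠ sign u) : |u| ≤ |u - v| := by
  contrapose! h
  rw [abs_sub_comm] at h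
  simpa using sign_add_eq_right_of_abs_lt h

lemma add_div_mem_Ico_of_sign_ne (huv : sign u = sign v) (hne : sign (v + f) ≠ sign (u + f))
    (hopp : sign (u + f) ≠ -sign f) : f ≠ 0 ∧ (u + f) / f ∈ Ico (0 : K) 1 := by
  have hf : f ≠ 0 := by
    rintro rfl
    exact hne (by simpa using huv.symm)
  have hsign : sign (u / f) = sign (v / f) := by
    rw [div_eq_mul_inv, div_eq_mul_inv, sign_mul, sign_mul, huv]
  refine ⟨hf, ?_, ?_⟩
  · by_contra! hneg
    refine hopp ?_
    rw [← div_mul_cancel₀ (u + f) hf, sign_mul, sign_neg hneg, neg_one_mul]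
  · by_contra! hone
    have hu : 0 ≤ u / f := by rwa [add_div, div_self hf, le_add_iff_nonneg_left] at hone
    have hv : 0 ≤ v / f := sign_nonneg_iff.1 (hsign ▸ sign_nonneg_iff.2 hu)
    exact hne ((sign_add_eq_right_of_div_nonneg hf hv).trans
      (sign_add_eq_right_of_div_nonneg hf hu).symm)

lemma abs_lt_abs_of_div_mem_Ico (hf : f ≠ 0) (hu : u / f ∈ Ico (0 : K) 1) : |u| < |f| := by
  rw [← div_lt_one (abs_pos.2 hf), ← abs_div, abs_of_nonneg hu.1]
  exact hu.2

lemma abs_sub_lt_abs_of_div_mem_Ico (hf : f ≠ 0) (hu : u / f ∈ Ico (0 : K) 1)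
    (hv : v / f ∈ Ico (0 : K) 1) : |u - v| < |f| := by
  rw [← div_lt_one (abs_pos.2 hf), ← abs_div, sub_div]
  exact abs_sub_lt_of_nonneg_of_lt hu.1 hu.2 hv.1 hv.2

end OrderedField

section Counting

lemma ncard_le_of_gaps {A : Set ℕ} {N n : ℕ} (hA : A ⊆ Iio n)
    (hgap : ∀ s ∈ A, ∀ s' ∈ A, s < s' → s + N < s') : A.ncard ≤ n / (N + 1) + 1 := by
  have hmaps : ∀ s ∈ A, s / (N + 1) ∈ Iio (n / (N + 1) + 1) := fun s hs =>
    Nat.lt_succ_of_le (Nat.div_le_div_right (hA hs).le)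
  have hmono : StrictMonoOn (· / (N + 1)) A := fun s hs s' hs' hlt => by
    calc s / (N + 1) < (s + (N + 1)) / (N + 1) := by simp
      _ ≤ s' / (N + 1) := Nat.div_le_div_right (hgap s hs s' hs' hlt)
  simpa using ncard_le_ncard_of_injOn _ hmaps hmono.injOn (finite_Iio _)

lemma ncard_univ_pi_const {ι α : Type*} [Fintype ι] (S : Set α) :
    (univ.pi fun _ : ι => S).ncard = S.ncard ^ Fintype.card ι := by
  rw [← Nat.card_coe_set_eq, Nat.card_congr (Equiv.Set.univPi fun _ : ι => S), Nat.card_pi]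
  simp

lemma ncard_image_le_of_factorsThrough {α β γ : Type*} {f : α → β} {g : α → γ} {X : Set α}
    {S : Set γ} (hS : S.Finite) (hfg : f.FactorsThrough g) (hg : MapsTo g X S) :
    (f '' X).ncard ≤ S.ncard := by
  rcases X.eq_empty_or_nonempty with rfl | ⟨x, -⟩
  · simp
  have : Nonempty β := ⟨f x⟩
  obtain ⟨h, rfl⟩ := (Function.factorsThrough_iff f).1 hfg
  rw [image_comp]
  exact (ncard_image_le (hS.subset hg.image_subset)).trans (ncard_le_ncard hg.image_subset hS)

/-- The partially defined words `ι → β`, with `none` as undefined letter, that have at most `K`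
letters. -/
def sparseWords (ι β : Type*) (K : ℕ) : Set (ι → Option β) :=
  {e | {i | e i ≠ none}.ncard ≤ K}

-- Weight every word by `y` to the number of its letters; the total weight factors over `ι`.
lemma ncard_sparseWords_mul_pow_le {ι β : Type*} [Fintype ι] [Fintype β] (K : ℕ) {y : ℝ}
    (hy0 : 0 ≤ y) (hy1 : y ≤ 1) :
    (sparseWords ι β K).ncard * y ^ K ≤ (1 + Fintype.card β * y) ^ Fintype.card ι := by
  classical
  let weight (o : Option β) : ℝ := if o ≠ none then y else 1
  have hweight (o : Option β) : 0 ≤ weight o := by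
    dsimp only [weight]
    split_ifs <;> positivity
  have hsum : ∑ o, weight o = 1 + Fintype.card β * y := by
    simp [weight, Fintype.sum_option]
  have hprod (e : ι → Option β) : ∏ i, weight (e i) = y ^ {i | e i ≠ none}.ncard := by
    simp only [weight, Finset.prod_ite, Finset.prod_const, one_pow, mul_one,
      ncard_eq_toFinset_card', toFinset_ofPred]
  calc (sparseWords ι β K).ncard * y ^ K
      = ∑ _ ∈ (sparseWords ι β K).toFinset, y ^ K := by
        rw [Finset.sum_const, nsmul_eq_mul, ncard_eq_toFinset_card']
    _ ≤ ∑ e ∈ (sparseWords ι β K).toFinset, ∏ i, weight (e i) := by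
        refine Finset.sum_le_sum fun e he => ?_
        rw [hprod]
        exact pow_le_pow_of_le_one hy0 hy1 (show e ∈ sparseWords ι β K from mem_toFinset.1 he)
    _ ≤ ∑ e : ι → Option β, ∏ i, weight (e i) :=
        Finset.sum_le_sum_of_subset_of_nonneg (Finset.subset_univ _)
          fun e _ _ => Finset.prod_nonneg fun i _ => hweight (e i)
    _ = (1 + Fintype.card β * y) ^ Fintype.card ι := by
        rw [← hsum, ← Finset.card_univ, ← Finset.prod_const, Finset.prod_univ_sum,
          Fintype.piFinset_univ]

lemma ncard_sparseWords_le_exp {ι β : Type*} [Fintype ι] [Fintype β] (K : ℕ) {h : ℝ}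
    (hh : 0 ≤ h) : ((sparseWords ι β K).ncard : ℝ) ≤
      Real.exp (Fintype.card β * Real.exp (-h) * Fintype.card ι + h * K) := by
  have hweight := ncard_sparseWords_mul_pow_le (ι := ι) (β := β) K (Real.exp_nonneg (-h))
    (Real.exp_le_one_iff.2 (neg_nonpos.2 hh))
  rw [← Real.exp_nat_mul, mul_neg, Real.exp_neg, ← div_eq_mul_inv,
    div_le_iff₀ (Real.exp_pos _)] at hweight
  calc ((sparseWords ι β K).ncard : ℝ)
      ≤ (1 + Fintype.card β * Real.exp (-h)) ^ Fintype.card ι * Real.exp (K * h) := hweight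
    _ ≤ Real.exp (Fintype.card β * Real.exp (-h)) ^ Fintype.card ι * Real.exp (K * h) := by
        gcongr
        rw [add_comm]
        exact Real.add_one_le_exp _
    _ = Real.exp (Fintype.card β * Real.exp (-h) * Fintype.card ι + h * K) := by
        rw [← Real.exp_nat_mul, ← Real.exp_add]
        ring_nf

lemma exists_forall_eventually_ncard_sparseWords_le_exp (β : Type*) [Finite β] {η : ℝ}
    (hη : 0 < η) : ∃ N : ℕ, ∀ B : ℕ, ∀ᶠ n : ℕ in atTop,
      ((sparseWords (Fin n) β (n / (N + 1) + B)).ncard : ℝ) ≤ Real.exp (η * n) := by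
  have := Fintype.ofFinite β
  have hη3 : 0 < η / 3 := by positivity
  have hexp : Tendsto (fun h : ℝ => Fintype.card β * Real.exp (-h)) atTop (nhds 0) := by
    simpa using Real.tendsto_exp_neg_atTop_nhds_zero.const_mul (Fintype.card β : ℝ)
  obtain ⟨h, hβ, hh⟩ := ((hexp.eventually_lt_const hη3).and (eventually_ge_atTop 0)).exists
  obtain ⟨N, hN⟩ := exists_nat_gt (h / (η / 3))
  refine ⟨N, fun B => ?_⟩
  filter_upwards [(tendsto_natCast_atTop_atTop (R := ℝ)).eventually_ge_atTop (h * B / (η / 3))]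
    with n hn
  rw [div_lt_iff₀' hη3] at hN
  rw [div_le_iff₀' hη3] at hn
  have hgap : h * (n / (N + 1) : ℕ) ≤ η / 3 * n := by
    calc h * (n / (N + 1) : ℕ) ≤ η / 3 * (N + 1) * (n / (N + 1) : ℕ) := by
          gcongr
          linarith
      _ = η / 3 * ((N + 1) * (n / (N + 1)) : ℕ) := by
          push_cast
          ring
      _ ≤ η / 3 * n := by
          gcongr
          exact Nat.mul_div_le n (N + 1)
  refine (ncard_sparseWords_le_exp _ hh).trans (Real.exp_le_exp.2 ?_)
  calc Fintype.card β * Real.exp (-h) * Fintype.card (Fin n) + h * (n / (N + 1) + B : ℕ)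
      = Fintype.card β * Real.exp (-h) * n + (h * (n / (N + 1) : ℕ) + h * B) := by
        rw [Fintype.card_fin, Nat.cast_add, mul_add]
    _ ≤ η / 3 * n + (η / 3 * n + η / 3 * n) := by gcongr
    _ = η * n := by ring

end Counting

section Languages

variable {α ι : Type*}

/-- The factor of length `n` at position `s` of an infinite word. -/
def factorAt (u : ℕ → α) (s n : ℕ) : Fin n → α := fun j => u (s + j)

/-- The words of length `n` that are prefixes of elements of `X`. -/
def prefixes (X : Set (ℕ → α)) (n : ℕ) : Set (Fin n → α) :=
  (fun u => factorAt u 0 n) '' X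

lemma ncard_prefixes_le_pow [Finite α] {n : ℕ} (hn : 0 < n) (S : Set (Fin n → α)) (L : ℕ) :
    (prefixes {u | ∀ s, factorAt u s n ∈ S} L).ncard ≤ S.ncard ^ (L / n + 1) := by
  let blocks (u : ℕ → α) (k : Fin (L / n + 1)) : Fin n → α := factorAt u (k * n) n
  have hblocks : (fun u : ℕ → α => factorAt u 0 L).FactorsThrough blocks := fun u w h => by
    funext t
    have hk : (t : ℕ) / n < L / n + 1 := Nat.lt_succ_of_le (Nat.div_le_div_right t.2.le)
    simpa [blocks, factorAt, Nat.div_add_mod'] using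
      congrFun (congrFun h ⟨t / n, hk⟩) ⟨t % n, Nat.mod_lt _ hn⟩
  have hS : MapsTo blocks {u | ∀ s, factorAt u s n ∈ S} (univ.pi fun _ => S) :=
    fun u hu k _ => hu (k * n)
  simpa [prefixes, ncard_univ_pi_const] using
    ncard_image_le_of_factorsThrough (toFinite _) hblocks hS

-- Each `X i` is confined to the words all of whose factors of length `n` lie in one of the at most
-- `2 ^ |α| ^ n` sets of at most `b` words, however many indices `i` there are.
lemma ncard_prefixes_iUnion_le [Fintype α] {X : ι → Set (ℕ → α)}
    (hX : ∀ i, ∀ u ∈ X i, ∀ s, (fun t => u (s + t)) ∈ X i) {n : ℕ} (hn : 0 < n) {b : ℝ}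
    (hb0 : 0 ≤ b) (hb : ∀ i, ((prefixes (X i) n).ncard : ℝ) ≤ b) (L : ℕ) :
    ((prefixes (⋃ i, X i) L).ncard : ℝ) ≤ 2 ^ Fintype.card α ^ n * b ^ (L / n + 1) := by
  classical
  let small : Finset (Set (Fin n → α)) := {S | (S.ncard : ℝ) ≤ b}
  let confined (S : Set (Fin n → α)) : Set (Fin L → α) := prefixes {u | ∀ s, factorAt u s n ∈ S} L
  have hcover : prefixes (⋃ i, X i) L ⊆ ⋃ S ∈ small, confined S := by
    rintro _ ⟨u, hu, rfl⟩
    obtain ⟨i, hi⟩ := mem_iUnion.1 hu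
    refine mem_biUnion (x := prefixes (X i) n) (by simpa [small] using hb i) ⟨u, fun s => ?_, rfl⟩
    exact ⟨_, hX i u hi s, funext fun j => by simp only [factorAt, zero_add]⟩
  have hconfined : ∀ S ∈ small, ((confined S).ncard : ℝ) ≤ b ^ (L / n + 1) := fun S hS => by
    calc ((confined S).ncard : ℝ) ≤ (S.ncard : ℝ) ^ (L / n + 1) := by
          exact_mod_cast ncard_prefixes_le_pow hn S L
      _ ≤ b ^ (L / n + 1) := by
          gcongr
          simpa [small] using hS
  have hsmall : (small.card : ℝ) ≤ 2 ^ Fintype.card α ^ n := by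
    exact_mod_cast (Finset.card_le_univ small).trans_eq (by simp)
  calc ((prefixes (⋃ i, X i) L).ncard : ℝ)
      ≤ ∑ S ∈ small, ((confined S).ncard : ℝ) := by
        exact_mod_cast (ncard_le_ncard hcover).trans (small.set_ncard_biUnion_le confined)
    _ ≤ small.card * b ^ (L / n + 1) := by
        simpa using Finset.sum_le_card_nsmul small _ _ hconfined
    _ ≤ 2 ^ Fintype.card α ^ n * b ^ (L / n + 1) := by gcongr

lemma tendsto_log_natCast_div_of_le_exp {p : ℕ → ℕ}
    (hp : ∀ η > 0, ∃ C, ∀ n, (p n : ℝ) ≤ Real.exp (C + η * n)) :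
    Tendsto (fun n => Real.log (p n) / n) atTop (nhds 0) := by
  refine tendsto_order.2 ⟨fun a ha => .of_forall fun n =>
    ha.trans_le (div_nonneg (Real.log_natCast_nonneg _) n.cast_nonneg), fun a ha => ?_⟩
  obtain ⟨C, hC⟩ := hp (a / 2) (half_pos ha)
  filter_upwards [(tendsto_const_div_atTop_nhds_zero_nat C).eventually_lt_const (half_pos ha),
    eventually_gt_atTop 0] with n hCn hn
  rcases (p n).eq_zero_or_pos with hpn | hpn
  · simpa [hpn] using ha
  have hn' : (0 : ℝ) < n := Nat.cast_pos.2 hn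
  calc Real.log (p n) / n ≤ (C + a / 2 * n) / n := by
        gcongr
        exact (Real.log_le_iff_le_exp (Nat.cast_pos.2 hpn)).2 (hC n)
    _ = C / n + a / 2 := by rw [add_div, mul_div_cancel_right₀ _ hn'.ne']
    _ < a := by linarith

lemma tendsto_log_natCast_div_of_le {p q : ℕ → ℕ} (hpq : ∀ n, p n ≤ q n)
    (hq : Tendsto (fun n => Real.log (q n) / n) atTop (nhds 0)) :
    Tendsto (fun n => Real.log (p n) / n) atTop (nhds 0) := by
  refine squeeze_zero (fun n => div_nonneg (Real.log_natCast_nonneg _) n.cast_nonneg)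
    (fun n => ?_) hq
  rcases (p n).eq_zero_or_pos with hpn | hpn
  · simpa [hpn] using div_nonneg (Real.log_natCast_nonneg (q n)) n.cast_nonneg
  · gcongr
    exact hpq n

theorem tendsto_log_ncard_prefixes_iUnion [Finite α] {X : ι → Set (ℕ → α)}
    (hX : ∀ i, ∀ u ∈ X i, ∀ s, (fun t => u (s + t)) ∈ X i)
    (hgrowth : ∀ η > 0, ∀ᶠ n : ℕ in atTop, ∀ i,
      ((prefixes (X i) n).ncard : ℝ) ≤ Real.exp (η * n)) :
    Tendsto (fun n : ℕ => Real.log (prefixes (⋃ i, X i) n).ncard / n) atTop (nhds 0) := by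
  have := Fintype.ofFinite α
  refine tendsto_log_natCast_div_of_le_exp fun η hη => ?_
  obtain ⟨n, hb, hn⟩ := ((hgrowth η hη).and (eventually_gt_atTop 0)).exists
  refine ⟨Real.log 2 * Fintype.card α ^ n + η * n, fun L => ?_⟩
  have hL : ((L / n : ℕ) : ℝ) * n ≤ L := by exact_mod_cast Nat.div_mul_le_self L n
  calc ((prefixes (⋃ i, X i) L).ncard : ℝ)
      ≤ 2 ^ Fintype.card α ^ n * Real.exp (η * n) ^ (L / n + 1) :=
        ncard_prefixes_iUnion_le hX hn (Real.exp_nonneg _) hb L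
    _ = Real.exp (Real.log 2 * Fintype.card α ^ n + η * n + η * ((L / n : ℕ) * n)) := by
        rw [← Real.exp_nat_mul, ← Real.rpow_natCast, Real.rpow_def_of_pos two_pos, ← Real.exp_add]
        push_cast
        ring_nf
    _ ≤ Real.exp (Real.log 2 * Fintype.card α ^ n + η * n + η * L) := by gcongr

end Languages

/-! ### Maps that are affine on each orthant -/

/-- A map of `ℝ ^ G` that is the same homothety followed by a translation on each orthant, with the
translation vector depending on the orthant. -/
structure SignAffineSystem (G : Type*) where
  /-- The common ratio of the homotheties. -/
  slope : ℝ
  /-- The translation vector on the orthant with the given signs. -/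
  offset : (G → SignType) → G → ℝ

namespace SignAffineSystem

variable {G : Type*} (T : SignAffineSystem G)

/-- The map of `ℝ ^ G` that defines the dynamics. -/
def map (x : G → ℝ) (a : G) : ℝ := T.slope * x a + T.offset (fun b => sign (x b)) a

/-- The position at time `t` of the point that starts from `x`. -/
def orbit (x : G → ℝ) (t : ℕ) : G → ℝ := T.map^[t] x

/-- The orthants visited by the orbit of `x`, encoded by their signs. -/
def itinerary (x : G → ℝ) (t : ℕ) (a : G) : SignType := sign (T.orbit x t a)

/-- The displacement of the coordinate `a` between times `t` and `t + m`, corrected for the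
contraction; it depends only on the itinerary between these times. -/
def drift (x : G → ℝ) (a : G) (t m : ℕ) : ℝ := T.orbit x (t + m) a - T.slope ^ m * T.orbit x t a

/-- At time `t`, the sign of the coordinate `a` is not determined by the previous itinerary
of `x`. -/
def Branches (x : G → ℝ) (a : G) (t : ℕ) : Prop :=
  ∃ y, EqOn (T.itinerary y) (T.itinerary x) (Iio t) ∧ T.itinerary y t a ≠ T.itinerary x t a

/-- `t` and `t + m` are consecutive branching times of the coordinate `a`. -/
def ConsecutiveBranches (x : G → ℝ) (a : G) (t m : ℕ) : Prop :=
  0 < m ∧ T.Branches x a t ∧ T.Branches x a (t + m) ∧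
    ∀ s, t < s → s < t + m → ¬ T.Branches x a s

/-- `t` and `t + m` are consecutive branching times, and the sign at time `t + m` is not the
opposite of the sign of the drift, which is the default choice in `code`. -/
def Exceptional (x : G → ℝ) (a : G) (t m : ℕ) : Prop :=
  T.ConsecutiveBranches x a t m ∧ T.itinerary x (t + m) a ≠ -sign (T.drift x a t m)

/-- `s` is a branching time of the coordinate `a`, and there is no other one among the `N` preceding
times. -/
def Isolated (N : ℕ) (x : G → ℝ) (a : G) (s : ℕ) : Prop :=
  T.Branches x a s ∧ ∀ r < s, T.Branches x a r → r + N < s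

/-- The times at which `code` records the sign of the coordinate `a`. -/
def Marked (N : ℕ) (x : G → ℝ) (a : G) (s : ℕ) : Prop :=
  T.Isolated N x a s ∨ ∃ t m, m ≤ N ∧ t + m = s ∧ T.Exceptional x a t m

/-- The exceptional pairs at distance at most `N`. -/
def exceptionalPairs (N : ℕ) (x : G → ℝ) (a : G) : Set (ℕ × ℕ) :=
  {p | p.2 ≤ N ∧ T.Exceptional x a p.1 p.2}

open Classical in
/-- The itinerary of the coordinate `a` reduced to its marked letters; the codes of all coordinates
determine the itinerary. -/
def code (N : ℕ) (x : G → ℝ) (a : G) (s : ℕ) : Option SignType :=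
  if T.Marked N x a s then some (T.itinerary x s a) else none

variable {T} {x y : G → ℝ} {a : G} {s t m N n : ℕ}

lemma orbit_succ_apply (T : SignAffineSystem G) (x : G → ℝ) (t : ℕ) (a : G) :
    T.orbit x (t + 1) a = T.slope * T.orbit x t a + T.offset (T.itinerary x t) a := by
  rw [orbit, Function.iterate_succ_apply']
  rfl

lemma orbit_orbit (T : SignAffineSystem G) (x : G → ℝ) (s t : ℕ) :
    T.orbit (T.orbit x s) t = T.orbit x (s + t) := by
  rw [orbit, orbit, orbit, add_comm, Function.iterate_add_apply]

lemma itinerary_orbit (T : SignAffineSystem G) (x : G → ℝ) (s t : ℕ) :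
    T.itinerary (T.orbit x s) t = T.itinerary x (s + t) := by
  funext a
  rw [itinerary, itinerary, orbit_orbit]

lemma orbit_add_apply (T : SignAffineSystem G) (x : G → ℝ) (a : G) (t m : ℕ) :
    T.orbit x (t + m) a = T.slope ^ m * T.orbit x t a + T.drift x a t m := by
  rw [drift, add_sub_cancel]

lemma drift_congr {t' : ℕ} (h : ∀ i < m, T.itinerary x (t + i) = T.itinerary y (t' + i)) :
    T.drift x a t m = T.drift y a t' m := by
  induction m with
  | zero => simp [drift]
  | succ m ih =>
    have hm := ih fun i hi => h i (hi.trans m.lt_succ_self)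
    simp only [drift, ← add_assoc, orbit_succ_apply, pow_succ', h m m.lt_succ_self] at hm ⊢
    linear_combination T.slope * hm

lemma drift_congr_of_eqOn (h : EqOn (T.itinerary x) (T.itinerary y) (Iio (t + m))) :
    T.drift x a t m = T.drift y a t m :=
  drift_congr fun _ hi => h (Nat.add_lt_add_left hi t)

lemma abs_orbit_sub_orbit_le (hT : |T.slope| ≤ 1)
    (h : EqOn (T.itinerary x) (T.itinerary y) (Iio (t + m))) :
    |T.orbit x (t + m) a - T.orbit y (t + m) a| ≤ |T.orbit x t a - T.orbit y t a| := by
  rw [orbit_add_apply, orbit_add_apply, drift_congr_of_eqOn h, add_sub_add_right_eq_sub,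
    ← mul_sub, abs_mul, abs_pow]
  exact mul_le_of_le_one_left (abs_nonneg _) (pow_le_one₀ (abs_nonneg _) hT)

lemma Branches.congr (hb : T.Branches x a t)
    (h : EqOn (T.itinerary x) (T.itinerary y) (Iio t)) : T.Branches y a t := by
  obtain ⟨z, hz, hne⟩ := hb
  by_cases hxy : T.itinerary x t a = T.itinerary y t a
  · exact ⟨z, hz.trans h, hxy ▸ hne⟩
  · exact ⟨x, h, hxy⟩

lemma ConsecutiveBranches.congr (hc : T.ConsecutiveBranches x a t m)
    (h : EqOn (T.itinerary x) (T.itinerary y) (Iio (t + m))) :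
    T.ConsecutiveBranches y a t m := by
  obtain ⟨hm, ht, htm, hbetween⟩ := hc
  exact ⟨hm, ht.congr (h.mono (Iio_subset_Iio (by lia))), htm.congr h, fun s hts hstm hb =>
    hbetween s hts hstm (hb.congr (h.symm.mono (Iio_subset_Iio hstm.le)))⟩

lemma Exceptional.congr (he : T.Exceptional x a t m)
    (h : EqOn (T.itinerary x) (T.itinerary y) (Iio (t + m + 1))) : T.Exceptional y a t m := by
  have h' := h.mono (Iio_subset_Iio (t + m).le_succ)
  refine ⟨he.1.congr h', ?_⟩
  rw [← drift_congr_of_eqOn h', ← h (t + m).lt_succ_self]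
  exact he.2

lemma Branches.exists_consecutiveBranches (hs : T.Branches x a s) (hni : ¬ T.Isolated N x a s) :
    ∃ t m, m ≤ N ∧ t + m = s ∧ T.ConsecutiveBranches x a t m := by
  classical
  obtain ⟨r, hrs, hr, hsr⟩ : ∃ r < s, T.Branches x a r ∧ s ≤ r + N := by
    simpa [Isolated, hs] using hni
  let last := Nat.findGreatest (T.Branches x a) (s - 1)
  have hr_le : r ≤ last := Nat.le_findGreatest (by lia) hr
  have hlast_le : last ≤ s - 1 := Nat.findGreatest_le _
  have hadd : last + (s - last) = s := by lia
  refine ⟨last, s - last, by lia, hadd, by lia, Nat.findGreatest_spec (by lia) hr, ?_, ?_⟩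
  · rwa [hadd]
  · exact fun t hlt hts => Nat.findGreatest_is_greatest hlt (by lia)

/-! ### Decoding -/

lemma itinerary_eq_neg_sign_drift (hc : T.ConsecutiveBranches x a t m) (hm : m ≤ N)
    (hnm : ¬ T.Marked N x a (t + m)) :
    T.itinerary x (t + m) a = -sign (T.drift x a t m) := by
  by_contra hne
  exact hnm (.inr ⟨t, m, hm, rfl, hc, hne⟩)

lemma itinerary_apply_eq_of_code_eq (h : EqOn (T.itinerary x) (T.itinerary y) (Iio s))
    (hcode : T.code N x a s = T.code N y a s) : T.itinerary x s a = T.itinerary y s a := by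
  by_contra hne
  have hx : T.Branches x a s := ⟨y, h.symm, Ne.symm hne⟩
  by_cases hmx : T.Marked N x a s <;> by_cases hmy : T.Marked N y a s <;>
    simp only [code, hmx, hmy, if_true, if_false, Option.some.injEq, reduceCtorEq] at hcode
  · exact hne hcode
  obtain ⟨t, m, hm, rfl, hc⟩ := hx.exists_consecutiveBranches fun hi => hmx (.inl hi)
  refine hne ?_
  rw [itinerary_eq_neg_sign_drift hc hm hmx, itinerary_eq_neg_sign_drift (hc.congr h) hm hmy,
    drift_congr_of_eqOn h]

lemma eqOn_itinerary_of_code_eq (h : ∀ a, EqOn (T.code N x a) (T.code N y a) (Iio n)) :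
    EqOn (T.itinerary x) (T.itinerary y) (Iio n) := by
  intro s hs
  induction s using Nat.strong_induction_on with
  | _ s ih =>
    funext a
    exact itinerary_apply_eq_of_code_eq (fun r hr => ih r hr (hr.trans (mem_Iio.1 hs)))
      (h a hs)

/-! ### Rarity of exceptional times -/

lemma Exceptional.orbit_div_drift_mem_Ico (he : T.Exceptional x a t m) :
    T.drift x a t m ≠ 0 ∧ T.orbit x (t + m) a / T.drift x a t m ∈ Ico (0 : ℝ) 1 := by
  obtain ⟨⟨hm, -, ⟨y, hy, hne⟩, -⟩, hopp⟩ := he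
  have hsign : sign (T.slope ^ m * T.orbit x t a) = sign (T.slope ^ m * T.orbit y t a) := by
    rw [sign_mul, sign_mul]
    exact congrArg _ (congrFun (hy.symm (Nat.lt_add_of_pos_right hm)) a)
  rw [itinerary, itinerary, orbit_add_apply, orbit_add_apply, drift_congr_of_eqOn hy] at hne
  rw [itinerary, orbit_add_apply] at hopp
  rw [orbit_add_apply]
  exact add_div_mem_Ico_of_sign_ne hsign hne hopp

-- Otherwise the drift would dictate the sign at time `t + m`.
lemma Branches.exists_abs_drift_le (hT : |T.slope| ≤ 1) (hb : T.Branches x a (t + m)) :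
    ∃ y, EqOn (T.itinerary y) (T.itinerary x) (Iio (t + m)) ∧
      |T.drift x a t m| ≤ |T.orbit y t a| := by
  by_contra! hsmall
  have hforced : ∀ y, EqOn (T.itinerary y) (T.itinerary x) (Iio (t + m)) →
      T.itinerary y (t + m) a = sign (T.drift x a t m) := fun y hy => by
    rw [itinerary, orbit_add_apply, drift_congr_of_eqOn hy]
    refine sign_add_eq_right_of_abs_lt (lt_of_le_of_lt ?_ (hsmall y hy))
    rw [abs_mul, abs_pow]
    exact mul_le_of_le_one_left (abs_nonneg _) (pow_le_one₀ (abs_nonneg _) hT)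
  obtain ⟨y, hy, hne⟩ := hb
  exact hne ((hforced y hy).trans (hforced x fun _ _ => rfl).symm)

-- The orbits that follow the itinerary of `x` up to time `t + m` are then between `0` and the
-- drift, and they stay within less than the drift of one another. Branching at `t' + m` needs
-- such an orbit at distance at least the drift from `0` at time `t'`, and branching at `t'` one
-- on the other side.
lemma Exceptional.not_lt (hT : |T.slope| ≤ 1) {t' : ℕ} (he : T.Exceptional x a t m)
    (he' : T.Exceptional x a t' m) (h : ∀ i < m, T.itinerary x (t + i) = T.itinerary x (t' + i)) :
    ¬ t < t' := by
  intro hlt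
  have hdrift : T.drift x a t' m = T.drift x a t m := (drift_congr h).symm
  obtain ⟨-, ht', htm', hbetween⟩ := he'.1
  obtain ⟨y, hy, hfar⟩ := htm'.exists_abs_drift_le hT
  rw [hdrift] at hfar
  have hf := he.orbit_div_drift_mem_Ico.1
  have hconfined : ∀ z, EqOn (T.itinerary x) (T.itinerary z) (Iio (t + m + 1)) →
      T.orbit z (t + m) a / T.drift x a t m ∈ Ico (0 : ℝ) 1 := fun z hz => by
    rw [drift_congr_of_eqOn (hz.mono (Iio_subset_Iio (t + m).le_succ))]
    exact (he.congr hz).orbit_div_drift_mem_Ico.2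
  have hm := he.1.1
  have hy_conf := hconfined y (hy.symm.mono (Iio_subset_Iio (by lia)))
  obtain ⟨k, rfl⟩ : ∃ k, t' = t + m + k := Nat.exists_eq_add_of_le (by
    by_contra! hcon
    exact hbetween (t + m) hcon (by lia) he.1.2.2.1)
  rcases k.eq_zero_or_pos with rfl | hk
  · exact (abs_lt_abs_of_div_mem_Ico hf hy_conf).not_ge hfar
  obtain ⟨z, hz, hne⟩ := ht'.congr (hy.symm.mono (Iio_subset_Iio (Nat.le_add_right _ m)))
  have hz_conf := hconfined z ((hy.symm.mono (Iio_subset_Iio (by lia))).trans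
    (hz.symm.mono (Iio_subset_Iio (by lia))))
  refine lt_irrefl |T.drift x a t m| ?_
  calc |T.drift x a t m| ≤ |T.orbit y (t + m + k) a| := hfar
    _ ≤ |T.orbit y (t + m + k) a - T.orbit z (t + m + k) a| := abs_le_abs_sub_of_sign_ne hne
    _ ≤ |T.orbit y (t + m) a - T.orbit z (t + m) a| := abs_orbit_sub_orbit_le hT hz.symm
    _ < |T.drift x a t m| := abs_sub_lt_abs_of_div_mem_Ico hf hy_conf hz_conf

section Finite

variable [Fintype G]

lemma exceptionalPairs_finite_and_ncard_le (hT : |T.slope| ≤ 1) (N : ℕ) (x : G → ℝ) (a : G) :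
    (T.exceptionalPairs N x a).Finite ∧
      (T.exceptionalPairs N x a).ncard ≤ (N + 1) * (3 ^ Fintype.card G) ^ N := by
  let key (p : ℕ × ℕ) : ℕ × (Fin N → G → SignType) := (p.2, factorAt (T.itinerary x) p.1 N)
  let keys : Set (ℕ × (Fin N → G → SignType)) := Iio (N + 1) ×ˢ univ
  have hkeys : keys.Finite := (finite_Iio _).prod finite_univ
  have hmaps : ∀ p ∈ T.exceptionalPairs N x a, key p ∈ keys :=
    fun p hp => ⟨Nat.lt_succ_of_le hp.1, mem_univ _⟩
  have hinj : InjOn key (T.exceptionalPairs N x a) := by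
    rintro ⟨t, m⟩ ⟨hm, he⟩ ⟨t', m'⟩ ⟨-, he'⟩ heq
    obtain ⟨rfl, hfactor⟩ := Prod.mk.inj heq
    have hwindow : ∀ i < m, T.itinerary x (t + i) = T.itinerary x (t' + i) := fun i hi =>
      congrFun hfactor ⟨i, hi.trans_le hm⟩
    exact Prod.ext (le_antisymm
      (not_lt.1 (he'.not_lt hT he fun i hi => (hwindow i hi).symm))
      (not_lt.1 (he.not_lt hT he' hwindow))) rfl
  refine ⟨.of_injOn hmaps hinj hkeys, ?_⟩
  calc _ ≤ keys.ncard := ncard_le_ncard_of_injOn key hmaps hinj hkeys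
    _ = (N + 1) * (3 ^ Fintype.card G) ^ N := by
      have hcard : Fintype.card SignType = 3 := rfl
      simp [keys, ncard_prod, ncard_univ, Nat.card_fun, hcard]

lemma ncard_marked_le (hT : |T.slope| ≤ 1) (N n : ℕ) (x : G → ℝ) (a : G) :
    {s | s < n ∧ T.Marked N x a s}.ncard ≤
      n / (N + 1) + (1 + (N + 1) * (3 ^ Fintype.card G) ^ N) := by
  obtain ⟨hfin, hexc⟩ := exceptionalPairs_finite_and_ncard_le hT N x a
  let isolated := {s | s < n ∧ T.Isolated N x a s}
  let exceptional := (fun p : ℕ × ℕ => p.1 + p.2) '' T.exceptionalPairs N x a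
  have hisolated : isolated.ncard ≤ n / (N + 1) + 1 :=
    ncard_le_of_gaps (fun s hs => hs.1) fun s hs s' hs' hlt => hs'.2.2 s hlt hs.2.1
  have hcover : {s | s < n ∧ T.Marked N x a s} ⊆ isolated ∪ exceptional := by
    rintro s ⟨hs, hi | ⟨t, m, hm, rfl, he⟩⟩
    · exact .inl ⟨hs, hi⟩
    · exact .inr ⟨(t, m), ⟨hm, he⟩, rfl⟩
  have hunion : (isolated ∪ exceptional).Finite :=
    ((finite_Iio n).subset fun s hs => hs.1).union (hfin.image _)
  calc {s | s < n ∧ T.Marked N x a s}.ncard ≤ (isolated ∪ exceptional).ncard :=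
        ncard_le_ncard hcover hunion
    _ ≤ isolated.ncard + exceptional.ncard := ncard_union_le _ _
    _ ≤ (n / (N + 1) + 1) + (N + 1) * (3 ^ Fintype.card G) ^ N :=
        add_le_add hisolated ((ncard_image_le hfin).trans hexc)
    _ = n / (N + 1) + (1 + (N + 1) * (3 ^ Fintype.card G) ^ N) := add_assoc _ _ _

lemma factorAt_code_mem_sparseWords (hT : |T.slope| ≤ 1) (N n : ℕ) (x : G → ℝ) (a : G) :
    factorAt (T.code N x a) 0 n ∈
      sparseWords (Fin n) SignType (n / (N + 1) + (1 + (N + 1) * (3 ^ Fintype.card G) ^ N)) := by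
  refine le_trans ?_ (ncard_marked_le hT N n x a)
  refine ncard_le_ncard_of_injOn Fin.val (fun j hj => ⟨j.2, ?_⟩) Fin.val_injective.injOn
    ((finite_Iio n).subset fun s hs => hs.1)
  by_contra hnm
  exact hj (by simp [factorAt, code, hnm])

lemma ncard_prefixes_itinerary_le (hT : |T.slope| ≤ 1) (N n : ℕ) :
    (prefixes (range T.itinerary) n).ncard ≤ (sparseWords (Fin n) SignType
      (n / (N + 1) + (1 + (N + 1) * (3 ^ Fintype.card G) ^ N))).ncard ^ Fintype.card G := by
  have hdecode : (fun x => factorAt (T.itinerary x) 0 n).FactorsThrough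
      fun x a => factorAt (T.code N x a) 0 n := fun x y hxy => by
    have h : EqOn (T.itinerary x) (T.itinerary y) (Iio n) :=
      eqOn_itinerary_of_code_eq fun a s hs => by
        simpa [factorAt] using congrFun (congrFun hxy a) ⟨s, hs⟩
    funext j
    simpa [factorAt] using h j.2
  rw [prefixes, ← image_univ, image_image, ← ncard_univ_pi_const]
  exact ncard_image_le_of_factorsThrough (toFinite _) hdecode fun x _ a _ =>
    factorAt_code_mem_sparseWords hT N n x a

end Finite

lemma eventually_ncard_prefixes_itinerary_le (G : Type*) [Finite G] {η : ℝ} (hη : 0 < η) :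
    ∀ᶠ n : ℕ in atTop, ∀ T : SignAffineSystem G, |T.slope| ≤ 1 →
      ((prefixes (range T.itinerary) n).ncard : ℝ) ≤ Real.exp (η * n) := by
  have := Fintype.ofFinite G
  obtain ⟨N, hN⟩ := exists_forall_eventually_ncard_sparseWords_le_exp SignType
    (show 0 < η / (Fintype.card G + 1) by positivity)
  filter_upwards [hN (1 + (N + 1) * (3 ^ Fintype.card G) ^ N)] with n hn T hT
  calc ((prefixes (range T.itinerary) n).ncard : ℝ)
      ≤ ((sparseWords (Fin n) SignType
          (n / (N + 1) + (1 + (N + 1) * (3 ^ Fintype.card G) ^ N))).ncard : ℝ) ^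
            Fintype.card G := by exact_mod_cast ncard_prefixes_itinerary_le hT N n
    _ ≤ Real.exp (η / (Fintype.card G + 1) * n) ^ Fintype.card G := by gcongr
    _ = Real.exp (η * n * (Fintype.card G / (Fintype.card G + 1))) := by
        rw [← Real.exp_nat_mul]
        ring_nf
    _ ≤ Real.exp (η * n) := by
        refine Real.exp_le_exp.2 (mul_le_of_le_one_right (by positivity) ?_)
        exact (div_le_one (Nat.cast_add_one_pos _)).2 (lt_add_one _).le

theorem tendsto_log_ncard_prefixes_itinerary (G : Type*) [Finite G] :
    Tendsto (fun n : ℕ => Real.log (prefixes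
      (⋃ T : {T : SignAffineSystem G // |T.slope| ≤ 1}, range T.1.itinerary) n).ncard / n)
      atTop (nhds 0) := by
  refine tendsto_log_ncard_prefixes_iUnion ?_ fun η hη =>
    (eventually_ncard_prefixes_itinerary_le G hη).mono fun n hn T => hn T.1 T.2
  rintro ⟨T, -⟩ _ ⟨x, rfl⟩ s
  exact ⟨T.orbit x s, funext (T.itinerary_orbit x s)⟩

end SignAffineSystem

/-! ### Outer billiards -/

section Billiards

variable {d : ℕ} {v : Fin d → ℂ} {lam : ℝ} {k : Fin d} {z : ℂ}

lemma eq_of_mem_cone {k' : Fin d} (h : z ∈ cone v k) (h' : z ∈ cone v k') : k = k' := by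
  by_contra hne
  have hkk' := h k' (Ne.symm hne)
  have hk'k := h' k hne
  simp only [cross] at hkk' hk'k
  linarith

lemma billiardMap_of_mem_cone (h : z ∈ cone v k) :
    billiardMap v lam z = -(lam : ℂ) * z + (1 + (lam : ℂ)) * v k := by
  have hex : ∃ k : Fin d, z ∈ cone v k := ⟨k, h⟩
  rw [billiardMap, dif_pos hex, eq_of_mem_cone hex.choose_spec h]

/-- Twice the oriented areas of the triangles spanned by `z` and two vertices. Their signs tell in
which cone `z` lies. -/
def crossCoords (v : Fin d → ℂ) (z : ℂ) (a : Fin d × Fin d) : ℝ :=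
  cross (v a.1 - z) (v a.2 - z)

lemma mem_cone_iff_sign_crossCoords :
    z ∈ cone v k ↔ ∀ j ≠ k, sign (crossCoords v z (k, j)) = 1 := by
  simp only [cone, mem_ofPred_eq, crossCoords, sign_eq_one_iff]

lemma crossCoords_neg_smul_add (v : Fin d → ℂ) (lam : ℝ) (z p : ℂ) (a : Fin d × Fin d) :
    crossCoords v (-(lam : ℂ) * z + (1 + (lam : ℂ)) * p) a =
      -lam * crossCoords v z a + (1 + lam) * crossCoords v p a := by
  simp only [crossCoords, cross, Complex.sub_re, Complex.sub_im, Complex.add_re, Complex.add_im,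
    Complex.mul_re, Complex.mul_im, Complex.neg_re, Complex.neg_im, Complex.ofReal_re,
    Complex.ofReal_im, Complex.one_re, Complex.one_im]
  ring

/-- The itineraries of length `n` of the outer billiard map, without restricting the orbits to a
disc. -/
def billiardWords (v : Fin d → ℂ) (lam : ℝ) (n : ℕ) : Set (Fin n → Fin d) :=
  {i | ∃ z, ∀ j : Fin n, (billiardMap v lam)^[(j : ℕ)] z ∈ cone v (i j)}

lemma itinSet_subset_billiardWords {vP : Fin d → ℂ} {lP ε : ℝ} (h0 : 0 < lP - ε)
    (h1 : lP + ε < 1) (n : ℕ) :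
    ItinSet vP lP ε n ⊆ {i | ∃ v lam, |lam| ≤ 1 ∧ i ∈ billiardWords v lam n} := by
  rintro i ⟨⟨v, lam⟩, ⟨-, hlow, hhigh⟩, z, hz⟩
  exact ⟨v, lam, abs_le.2 ⟨by linarith, by linarith⟩, z, fun j => (hz j).1⟩

variable [NeZero d]

/-- The index of the cone with the given signs of `crossCoords`; arbitrary if there is none. -/
def coneIndex (σ : Fin d × Fin d → SignType) : Fin d :=
  Classical.epsilon fun k => ∀ j ≠ k, σ (k, j) = 1

lemma coneIndex_sign_crossCoords (h : z ∈ cone v k) :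
    coneIndex (fun a => sign (crossCoords v z a)) = k :=
  eq_of_mem_cone (mem_cone_iff_sign_crossCoords.2
    (Classical.epsilon_spec (p := fun k => ∀ j ≠ k, sign (crossCoords v z (k, j)) = 1)
      ⟨k, mem_cone_iff_sign_crossCoords.1 h⟩)) h

/-- The outer billiard map in the coordinates `crossCoords`. -/
def billiardSystem (v : Fin d → ℂ) (lam : ℝ) : SignAffineSystem (Fin d × Fin d) where
  slope := -lam
  offset σ a := (1 + lam) * crossCoords v (v (coneIndex σ)) a

lemma crossCoords_billiardMap (h : z ∈ cone v k) :
    crossCoords v (billiardMap v lam z) = (billiardSystem v lam).map (crossCoords v z) := by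
  funext a
  simp only [billiardMap_of_mem_cone h, crossCoords_neg_smul_add, SignAffineSystem.map,
    billiardSystem, coneIndex_sign_crossCoords h]

lemma crossCoords_iterate_billiardMap {n : ℕ}
    (h : ∀ t < n, ∃ k, (billiardMap v lam)^[t] z ∈ cone v k) :
    crossCoords v ((billiardMap v lam)^[n] z) =
      (billiardSystem v lam).orbit (crossCoords v z) n := by
  induction n with
  | zero => rfl
  | succ n ih =>
    obtain ⟨k, hk⟩ := h n n.lt_succ_self
    rw [Function.iterate_succ_apply', crossCoords_billiardMap hk,
      ih fun t ht => h t (ht.trans n.lt_succ_self), SignAffineSystem.orbit,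
      SignAffineSystem.orbit, Function.iterate_succ_apply']

lemma billiardWords_subset_image_prefixes (v : Fin d → ℂ) (lam : ℝ) (n : ℕ) :
    billiardWords v lam n ⊆
      (fun w j => coneIndex (w j)) '' prefixes (range (billiardSystem v lam).itinerary) n := by
  rintro i ⟨z, hz⟩
  refine ⟨_, ⟨_, ⟨crossCoords v z, rfl⟩, rfl⟩, funext fun j => ?_⟩
  have horbit : crossCoords v ((billiardMap v lam)^[(j : ℕ)] z) =
      (billiardSystem v lam).orbit (crossCoords v z) j :=
    crossCoords_iterate_billiardMap fun t ht => ⟨i ⟨t, ht.trans j.2⟩, hz ⟨t, ht.trans j.2⟩⟩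
  rw [← coneIndex_sign_crossCoords (hz j), horbit]
  simp only [factorAt, zero_add]
  rfl

lemma isOpen_setOf_isConvexPolygon : IsOpen {w : Fin d → ℂ | IsConvexPolygon w} := by
  simp only [IsConvexPolygon, ofPred_forall]
  refine isOpen_iInter_of_finite fun i => isOpen_iInter_of_finite fun j =>
    isOpen_iInter_of_finite fun _ => isOpen_iInter_of_finite fun _ =>
      isOpen_lt continuous_const ?_
  unfold cross
  fun_prop

lemma exists_radius_isConvexPolygon {vP : Fin d → ℂ} {lP : ℝ} (hconv : IsConvexPolygon vP)
    (hl : lP ∈ Ioo (0 : ℝ) 1) : ∃ ε > 0, 0 < lP - ε ∧ lP + ε < 1 ∧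
      ∀ w : Fin d → ℂ, ‖w - vP‖ < ε → IsConvexPolygon w := by
  obtain ⟨δ, hδ, hball⟩ := Metric.isOpen_iff.1 isOpen_setOf_isConvexPolygon vP hconv
  obtain ⟨ε, hε, hlt⟩ := exists_between (lt_min hδ (lt_min hl.1 (sub_pos.2 hl.2)))
  obtain ⟨hεδ, hε0, hε1⟩ : ε < δ ∧ ε < lP ∧ ε < 1 - lP := by simpa only [lt_min_iff] using hlt
  refine ⟨ε, hε, sub_pos.2 hε0, by linarith, fun w hw => hball ?_⟩
  rw [mem_ball_iff_norm]
  exact hw.trans hεδ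

end Billiards

theorem itinerary_subexponential_growth_general (d : ℕ) [NeZero d] :
    Tendsto (fun n : ℕ => Real.log ({i : Fin n → Fin d | ∃ (v : Fin d → ℂ) (lam : ℝ),
      |lam| ≤ 1 ∧ i ∈ billiardWords v lam n}).ncard / n) atTop (nhds 0) := by
  refine tendsto_log_natCast_div_of_le (fun n => ?_)
    (SignAffineSystem.tendsto_log_ncard_prefixes_itinerary (Fin d × Fin d))
  refine (ncard_le_ncard ?_ (toFinite _)).trans
    (ncard_image_le (f := fun w j => coneIndex (w j)) (toFinite _))
  rintro i ⟨v, lam, hlam, hi⟩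
  refine image_mono (image_mono ?_) (billiardWords_subset_image_prefixes v lam n hi)
  exact subset_iUnion_of_subset ⟨billiardSystem v lam, (abs_neg lam).trans_le hlam⟩ subset_rfl

/-- If `T_{P,λ}` has no singular connections, then for some `ε > 0` the number of
admissible itineraries of all systems in `Δ_ε(P,λ)` has subexponential growth:
`(1/n) log #I_n^ε → 0`. -/
theorem itinerary_subexponential_growth (d : ℕ) [NeZero d] (hd : 3 ≤ d)
    (vP : Fin d → ℂ) (lP : ℝ) (hconv : IsConvexPolygon vP)
    (hl : lP ∈ Set.Ioo (0 : ℝ) 1) (hns : ¬ HasSingularConnection vP lP) :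
    ∃ ε : ℝ, 0 < ε ∧ 0 < lP - ε ∧ lP + ε < 1 ∧
      (∀ w : Fin d → ℂ, ‖w - vP‖ < ε → IsConvexPolygon w) ∧
      Filter.Tendsto (fun n : ℕ => Real.log ((ItinSet vP lP ε n).ncard) / n)
        Filter.atTop (nhds 0) := by
  obtain ⟨ε, hε, hl0, hl1, hball⟩ := exists_radius_isConvexPolygon hconv hl
  exact ⟨ε, hε, hl0, hl1, hball, tendsto_log_natCast_div_of_le
    (fun n => ncard_le_ncard (itinSet_subset_billiardWords hl0 hl1 n) (toFinite _))
    (itinerary_subexponential_growth_general d)⟩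
end
end

section
/- For every α > 0: (i) r_α(0) = 1/(1+α), realized by the power series 1 − α ∑_{n≥1} x^n = 1 − αx/(1−x); (ii) r_α(k) ≥ 1/(1+α) for every integer k ≥ 0; and (iii) the infimum defining r_α(k) is attained, i.e. there exists p ∈ F_α with p^{(j)}(r_α(k)) = 0 for all j = 0, …, k. -/
open MeasureTheory Set Filter

noncomputable section

/-- The coefficient sequence `a` defines a power series in the class `F_α`:
`p(x) = 1 + ∑_{n ≥ 1} a_n xⁿ` with all coefficients `a_n ∈ [-α, α]`. -/
def memF (α : ℝ) (a : ℕ → ℝ) : Prop :=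
  a 0 = 1 ∧ ∀ n : ℕ, 1 ≤ n → |a n| ≤ α

/-- The function on `(-1,1)` defined by the power series with coefficients `a`. -/
def Fsum (a : ℕ → ℝ) (x : ℝ) : ℝ := ∑' n : ℕ, a n * x ^ n

/-- `r_α(k) = inf {x > 0 : ∃ p ∈ F_α, p⁽ʲ⁾(x) = 0 for j = 0, …, k}`. -/
def rAlpha (α : ℝ) (k : ℕ) : ℝ :=
  sInf {x : ℝ | 0 < x ∧ x < 1 ∧
    ∃ a : ℕ → ℝ, memF α a ∧ ∀ j : ℕ, j ≤ k → iteratedDeriv j (Fsum a) x = 0}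

/-!
A zero `x` of `p ∈ F_α` satisfies `1 = |p(x) - 1| ≤ α x / (1 - x)`, whence `x ≥ 1 / (1 + α)`.
The infimum is attained because `F_α` is compact for coefficientwise convergence and
`(x, p) ↦ p⁽ʲ⁾(x)` is continuous on `[-r, r] × F_α` for `r < 1`. Multiple zeros exist because the
average of `(1 - xᵐ)ᴷ` over `1 ≤ m ≤ M` has a zero of order `K` at `1`, constant coefficient `1`
and all other coefficients at most `2ᴷ / M` in absolute value; a small dilation moves the zero
into `(0, 1)`.
-/

section BoundedCoefficients

variable {a : ℕ → ℝ} {C x r : ℝ}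

lemma summable_descFactorial_mul_pow_sub (j : ℕ) (hr : |r| < 1) :
    Summable fun n : ℕ => (n.descFactorial j : ℝ) * r ^ (n - j) := by
  rw [← summable_nat_add_iff j]
  simpa only [Nat.add_sub_cancel] using summable_descFactorial_mul_geometric_of_norm_lt_one j hr

lemma norm_mul_descFactorial_mul_pow_sub_le (j n : ℕ) (ha : |a n| ≤ C) (hx : |x| ≤ r) :
    ‖a n * (n.descFactorial j * x ^ (n - j))‖ ≤ C * (n.descFactorial j * r ^ (n - j)) := by
  rw [norm_mul, norm_mul, norm_pow, Real.norm_natCast, Real.norm_eq_abs, Real.norm_eq_abs]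
  have hC : 0 ≤ C := (abs_nonneg _).trans ha
  gcongr

lemma summable_mul_descFactorial_mul_pow_sub (j : ℕ) (ha : ∀ n, |a n| ≤ C) (hx : |x| < 1) :
    Summable fun n : ℕ => a n * (n.descFactorial j * x ^ (n - j)) :=
  .of_norm_bounded
    ((summable_descFactorial_mul_pow_sub j (by rwa [abs_abs])).mul_left C)
    fun n => norm_mul_descFactorial_mul_pow_sub_le j n (ha n) le_rfl

lemma summable_mul_pow_of_abs_le (ha : ∀ n, |a n| ≤ C) (hx : |x| < 1) :
    Summable fun n => a n * x ^ n := by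
  simpa using summable_mul_descFactorial_mul_pow_sub 0 ha hx

lemma iteratedDeriv_const_mul_pow {𝕜 : Type*} [NontriviallyNormedField 𝕜] (c : 𝕜) (n j : ℕ)
    (x : 𝕜) :
    iteratedDeriv j (fun y : 𝕜 => c * y ^ n) x = c * (n.descFactorial j * x ^ (n - j)) := by
  rw [iteratedDeriv_const_mul_field, iteratedDeriv_pow]

lemma exists_abs_le_of_isCompact_subset_Ioo {K : Set ℝ} (hK : IsCompact K)
    (hKs : K ⊆ Ioo (-1) 1) : ∃ r, |r| < 1 ∧ ∀ x ∈ K, |x| ≤ r := by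
  rcases K.eq_empty_or_nonempty with rfl | hne
  · exact ⟨0, by simp, by simp⟩
  · obtain ⟨x₀, hx₀, hmax⟩ := hK.exists_isMaxOn hne continuous_abs.continuousOn
    exact ⟨|x₀|, by simpa using abs_lt.2 (hKs hx₀), fun x hx => hmax hx⟩

lemma summableLocallyUniformlyOn_mul_descFactorial_mul_pow_sub (j : ℕ) (ha : ∀ n, |a n| ≤ C) :
    SummableLocallyUniformlyOn (fun (n : ℕ) (x : ℝ) => a n * (n.descFactorial j * x ^ (n - j)))
      (Ioo (-1) 1) := by
  refine SummableLocallyUniformlyOn_of_locally_bounded isOpen_Ioo fun K hKs hK => ?_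
  obtain ⟨r, hr, hKr⟩ := exists_abs_le_of_isCompact_subset_Ioo hK hKs
  exact ⟨_, (summable_descFactorial_mul_pow_sub j hr).mul_left C, fun n x hx =>
    norm_mul_descFactorial_mul_pow_sub_le j n (ha n) (hKr x hx)⟩

theorem iteratedDeriv_Fsum (j : ℕ) (ha : ∀ n, |a n| ≤ C) (hx : |x| < 1) :
    iteratedDeriv j (Fsum a) x = ∑' n : ℕ, a n * (n.descFactorial j * x ^ (n - j)) := by
  have hterm (n i : ℕ) : EqOn (iteratedDerivWithin i (fun y : ℝ => a n * y ^ n) (Ioo (-1) 1))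
      (fun y => a n * (n.descFactorial i * y ^ (n - i))) (Ioo (-1) 1) :=
    (iteratedDerivWithin_of_isOpen isOpen_Ioo).trans fun y _ =>
      iteratedDeriv_const_mul_pow (a n) n i y
  have hx' : x ∈ Ioo (-1) 1 := abs_lt.1 hx
  rw [← iteratedDerivWithin_of_isOpen isOpen_Ioo hx']
  unfold Fsum
  rw [iteratedDerivWithin_tsum j isOpen_Ioo hx'
    (fun y hy => summable_mul_pow_of_abs_le ha (abs_lt.2 hy))]
  · exact tsum_congr fun n => hterm n j hx'
  · exact fun i _ _ => SummableLocallyUniformlyOn_congr (fun n => (hterm n i).symm)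
      (summableLocallyUniformlyOn_mul_descFactorial_mul_pow_sub i ha)
  · intro n i y _ hy
    have hpoly : DifferentiableAt ℝ (fun y : ℝ => a n * (n.descFactorial i * y ^ (n - i))) y := by
      fun_prop
    exact hpoly.congr_of_eventuallyEq ((hterm n i).eventuallyEq_of_mem (isOpen_Ioo.mem_nhds hy))

theorem continuousOn_iteratedDeriv_Fsum (j : ℕ) (hr : r < 1) :
    ContinuousOn (fun q : ℝ × (ℕ → ℝ) => iteratedDeriv j (Fsum q.2) q.1)
      (Icc (-r) r ×ˢ {a | ∀ n, |a n| ≤ C}) := by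
  rcases lt_or_ge r 0 with hr0 | hr0
  · simp [Icc_eq_empty (show ¬ -r ≤ r by linarith)]
  have hseries : ContinuousOn
      (fun q : ℝ × (ℕ → ℝ) => ∑' n : ℕ, q.2 n * (n.descFactorial j * q.1 ^ (n - j)))
      (Icc (-r) r ×ˢ {a | ∀ n, |a n| ≤ C}) :=
    continuousOn_tsum (fun n => by fun_prop)
      ((summable_descFactorial_mul_pow_sub j (by rwa [abs_of_nonneg hr0])).mul_left C)
      fun n q hq => norm_mul_descFactorial_mul_pow_sub_le j n (hq.2 n) (abs_le.2 hq.1)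
  exact hseries.congr fun q hq => iteratedDeriv_Fsum j hq.2 ((abs_le.2 hq.1).trans_lt hr)

end BoundedCoefficients

section CoefficientClass

variable {α x r : ℝ} {a : ℕ → ℝ}

lemma memF.nonneg (ha : memF α a) : 0 ≤ α :=
  (abs_nonneg (a 1)).trans (ha.2 1 le_rfl)

lemma memF.abs_le (ha : memF α a) (n : ℕ) : |a n| ≤ 1 + α := by
  rcases n.eq_zero_or_pos with rfl | hn
  · simpa [ha.1] using ha.nonneg
  · linarith [ha.2 n hn]

lemma isCompact_memF (α : ℝ) : IsCompact {a : ℕ → ℝ | memF α a} := by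
  have hbox : {a : ℕ → ℝ | memF α a} =
      univ.pi fun n : ℕ => if n = 0 then {1} else Icc (-α) α := by
    ext a
    simp only [mem_ofPred_eq, memF, mem_univ_pi, abs_le]
    refine ⟨fun h n => ?_, fun h => ⟨by simpa using h 0, fun n hn => ?_⟩⟩
    · split_ifs with hn
      · exact hn ▸ h.1
      · exact h.2 n (Nat.one_le_iff_ne_zero.2 hn)
    · simpa [Nat.one_le_iff_ne_zero.1 hn] using h n
  rw [hbox]
  refine isCompact_univ_pi fun n => ?_
  split_ifs
  exacts [isCompact_singleton, isCompact_Icc]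

lemma memF.abs_Fsum_sub_one_le (ha : memF α a) (hx : |x| < 1) :
    |Fsum a x - 1| ≤ α * (|x| / (1 - |x|)) := by
  have htail : Fsum a x - 1 = ∑' n, a (n + 1) * x ^ (n + 1) := by
    rw [Fsum, (summable_mul_pow_of_abs_le ha.abs_le hx).tsum_eq_zero_add, ha.1]
    ring
  have hgeom : HasSum (fun n => α * (|x| * |x| ^ n)) (α * (|x| / (1 - |x|))) :=
    ((hasSum_geometric_of_lt_one (abs_nonneg x) hx).mul_left |x|).mul_left α
  rw [htail, ← Real.norm_eq_abs]
  refine tsum_of_norm_bounded hgeom fun n => ?_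
  rw [norm_mul, norm_pow, Real.norm_eq_abs, Real.norm_eq_abs, pow_succ']
  gcongr
  exact ha.2 (n + 1) n.succ_pos

theorem memF.one_div_le_abs_of_Fsum_eq_zero (ha : memF α a) (hx : |x| < 1) (h : Fsum a x = 0) :
    1 / (1 + α) ≤ |x| := by
  have hα := ha.nonneg
  have hone : 1 ≤ α * |x| / (1 - |x|) := by
    simpa [h, mul_div_assoc] using ha.abs_Fsum_sub_one_le hx
  rw [le_div_iff₀ (sub_pos.2 hx)] at hone
  rw [div_le_iff₀ (by positivity)]
  linarith

lemma memF_one_sub_geometric (hα : 0 ≤ α) :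
    memF α (fun n : ℕ => if n = 0 then 1 else -α) :=
  ⟨if_pos rfl, fun n hn => by simp [Nat.one_le_iff_ne_zero.1 hn, abs_of_nonneg hα]⟩

lemma Fsum_one_sub_geometric (α : ℝ) (hx : |x| < 1) :
    Fsum (fun n : ℕ => if n = 0 then 1 else -α) x = 1 - α * (x / (1 - x)) := by
  have htail : HasSum (fun n : ℕ => -α * (x * x ^ n)) (-α * (x / (1 - x))) :=
    ((hasSum_geometric_of_abs_lt_one hx).mul_left x).mul_left (-α)
  have hsum := HasSum.zero_add
    (f := fun n : ℕ => (if n = 0 then 1 else -α) * x ^ n) (by simpa [pow_succ'] using htail)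
  rw [Fsum, hsum.tsum_eq]
  simp [sub_eq_add_neg]

lemma Fsum_one_sub_geometric_one_div (hα : 0 < α) :
    Fsum (fun n : ℕ => if n = 0 then 1 else -α) (1 / (1 + α)) = 0 := by
  have hlt : |1 / (1 + α)| < 1 := by
    rw [abs_of_pos (by positivity), div_lt_one (by positivity)]
    linarith
  have hsub : 1 - 1 / (1 + α) = α / (1 + α) := by
    field_simp
    ring
  rw [Fsum_one_sub_geometric α hlt, hsub]
  field_simp
  ring

end CoefficientClass

section DilatedPolynomials

open Polynomial Topology

lemma Fsum_coeff (P : ℝ[X]) : Fsum P.coeff = fun x => P.eval x := by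
  funext x
  rw [Fsum, eval_eq_sum, Polynomial.sum]
  exact tsum_eq_sum fun n hn => by simp [notMem_support_iff.1 hn]

lemma iteratedDeriv_eval_eq_zero_of_pow_dvd {𝕜 : Type*} [NontriviallyNormedField 𝕜]
    [CompleteSpace 𝕜] [CharZero 𝕜] {P : 𝕜[X]} {c : 𝕜} {K j : ℕ}
    (hP : (X - C c) ^ K ∣ P) (hj : j < K) :
    iteratedDeriv j (fun x => P.eval x) c = 0 := by
  have hanalytic (R : 𝕜[X]) : AnalyticAt 𝕜 (fun x => R.eval x) c :=
    AnalyticOnNhd.eval_polynomial R c (mem_univ c)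
  obtain ⟨Q, rfl⟩ := hP
  have horder : (K : ℕ∞) ≤ analyticOrderAt (fun x => eval x ((X - C c) ^ K * Q)) c :=
    (natCast_le_analyticOrderAt (hanalytic _)).2
      ⟨fun x => Q.eval x, hanalytic Q, .of_forall fun z => by simp⟩
  exact (natCast_le_analyticOrderAt_iff_iteratedDeriv_eq_zero (hanalytic _)).1 horder j hj

lemma iteratedDeriv_Fsum_coeff_comp_eq_zero {P : ℝ[X]} {b c : ℝ} {K j : ℕ} (hb : b ≠ 0)
    (hP : (X - C c) ^ K ∣ P) (hj : j < K) :
    iteratedDeriv j (Fsum (P.comp (C b * X)).coeff) (c / b) = 0 := by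
  have hcomp : Fsum (P.comp (C b * X)).coeff = fun x => P.eval (b * x) := by
    simp [Fsum_coeff]
  have hsmooth : ContDiff ℝ j fun x => P.eval x := contDiff_aeval P j
  rw [hcomp, iteratedDeriv_comp_const_mul (f := fun x => P.eval x) hsmooth b]
  simp [mul_div_cancel₀ c hb, iteratedDeriv_eval_eq_zero_of_pow_dvd hP hj]

lemma eventually_memF_coeff_comp {P : ℝ[X]} {α : ℝ} (h₀ : P.coeff 0 = 1)
    (h : ∀ n, 1 ≤ n → |P.coeff n| < α) :
    ∀ᶠ b in 𝓝 (1 : ℝ), memF α (P.comp (C b * X)).coeff := by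
  have hsupp : ∀ᶠ b in 𝓝 (1 : ℝ), ∀ n ∈ P.support, 1 ≤ n → |P.coeff n * b ^ n| < α := by
    refine (Finset.eventually_all P.support).2 fun n _ => ?_
    by_cases hn : 1 ≤ n
    · have hcont : ContinuousAt (fun b : ℝ => |P.coeff n * b ^ n|) 1 := by fun_prop
      filter_upwards [hcont.eventually_lt_const (by simpa using h n hn)] with b hb _ using hb
    · simp [hn]
  filter_upwards [hsupp] with b hb
  refine ⟨by simp [h₀, comp_C_mul_X_coeff], fun n hn => ?_⟩
  rw [comp_C_mul_X_coeff]
  by_cases hmem : n ∈ P.support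
  · exact (hb n hmem hn).le
  · simpa [notMem_support_iff.1 hmem] using (abs_nonneg _).trans (h n hn).le

/-- The polynomial `M⁻¹ ∑_{m=1}^M (1 - Xᵐ)ᴷ`: it has a zero of order `K` at `1`, and its
non-constant coefficients are small when `M` is large. -/
def averagedPow (K M : ℕ) : ℝ[X] :=
  (M : ℝ)⁻¹ • ∑ m ∈ Finset.Icc 1 M, (1 - X ^ m) ^ K

lemma X_sub_one_pow_dvd_averagedPow (K M : ℕ) :
    (X - C 1) ^ K ∣ averagedPow K M := by
  refine dvd_smul_of_dvd _ (Finset.dvd_sum fun m _ => pow_dvd_pow_of_dvd ?_ K)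
  rw [C_1, dvd_sub_comm]
  exact sub_one_dvd_pow_sub_one _ _

lemma coeff_zero_averagedPow (K : ℕ) {M : ℕ} (hM : M ≠ 0) : (averagedPow K M).coeff 0 = 1 := by
  have hterm : ∀ m ∈ Finset.Icc 1 M, (((1 : ℝ[X]) - X ^ m) ^ K).coeff 0 = 1 := fun m hm => by
    simp [coeff_zero_eq_eval_zero, (Nat.one_le_iff_ne_zero.1 (Finset.mem_Icc.1 hm).1)]
  rw [averagedPow, coeff_smul, finsetSum_coeff, Finset.sum_congr rfl hterm]
  simp [hM]

lemma abs_coeff_one_sub_X_pow (K d : ℕ) : |(((1 : ℝ[X]) - X) ^ K).coeff d| = (K.choose d : ℝ) := by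
  have hcomp : ((1 : ℝ[X]) - X) ^ K = ((1 + X) ^ K).comp (C (-1) * X) := by
    simp [sub_eq_add_neg]
  rw [hcomp, comp_C_mul_X_coeff, coeff_one_add_X_pow, abs_mul, abs_neg_one_pow, mul_one,
    Nat.abs_cast]

lemma abs_coeff_one_sub_X_pow_pow (K n : ℕ) {m : ℕ} (hm : 0 < m) :
    |(((1 : ℝ[X]) - X ^ m) ^ K).coeff n| = if m ∣ n then (K.choose (n / m) : ℝ) else 0 := by
  have hexpand : ((1 : ℝ[X]) - X ^ m) ^ K = expand ℝ m ((1 - X) ^ K) := by simp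
  rw [hexpand, coeff_expand hm, apply_ite abs, abs_coeff_one_sub_X_pow, abs_zero]

lemma sum_choose_divisors_le (K n : ℕ) : ∑ d ∈ n.divisors, K.choose d ≤ 2 ^ K := by
  rw [← Nat.sum_range_choose]
  refine Finset.sum_le_sum_of_ne_zero fun d _ hd => ?_
  rw [Finset.mem_range, Nat.lt_succ_iff]
  exact not_lt.1 (mt Nat.choose_eq_zero_of_lt hd)

lemma abs_coeff_averagedPow_le (K M : ℕ) {n : ℕ} (hn : n ≠ 0) :
    |(averagedPow K M).coeff n| ≤ 2 ^ K / M := by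
  have hsum : |∑ m ∈ Finset.Icc 1 M, (((1 : ℝ[X]) - X ^ m) ^ K).coeff n| ≤ 2 ^ K :=
    calc |∑ m ∈ Finset.Icc 1 M, (((1 : ℝ[X]) - X ^ m) ^ K).coeff n|
      _ ≤ ∑ m ∈ Finset.Icc 1 M, |(((1 : ℝ[X]) - X ^ m) ^ K).coeff n| :=
        Finset.abs_sum_le_sum_abs _ _
      _ = ∑ m ∈ Finset.Icc 1 M with m ∣ n, (K.choose (n / m) : ℝ) := by
        rw [Finset.sum_filter]
        exact Finset.sum_congr rfl fun m hm =>
          abs_coeff_one_sub_X_pow_pow K n (Finset.mem_Icc.1 hm).1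
      _ ≤ ∑ m ∈ n.divisors, (K.choose (n / m) : ℝ) :=
        Finset.sum_le_sum_of_subset_of_nonneg
          (fun m hm => Nat.mem_divisors.2 ⟨(Finset.mem_filter.1 hm).2, hn⟩)
          fun m _ _ => Nat.cast_nonneg (K.choose (n / m))
      _ = ∑ d ∈ n.divisors, (K.choose d : ℝ) := Nat.sum_div_divisors n fun d => (K.choose d : ℝ)
      _ ≤ 2 ^ K := by exact_mod_cast sum_choose_divisors_le K n
  rw [averagedPow, coeff_smul, finsetSum_coeff, smul_eq_mul, abs_mul, abs_inv, Nat.abs_cast,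
    inv_mul_eq_div]
  gcongr

end DilatedPolynomials

section MultipleZeros

open Topology

variable {α x r : ℝ} {k : ℕ}

/-- The points of `(0, 1)` at which some member of `F_α` has a zero of order at least `k + 1`;
`rAlpha α k` is the infimum of this set. -/
def multipleZeros (α : ℝ) (k : ℕ) : Set ℝ :=
  {x | 0 < x ∧ x < 1 ∧ ∃ a, memF α a ∧ ∀ j ≤ k, iteratedDeriv j (Fsum a) x = 0}

lemma one_div_le_of_mem_multipleZeros (hx : x ∈ multipleZeros α k) : 1 / (1 + α) ≤ x := by
  obtain ⟨hx₀, hx₁, a, ha, hzero⟩ := hx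
  rw [← abs_of_pos hx₀] at hx₁ ⊢
  exact ha.one_div_le_abs_of_Fsum_eq_zero hx₁ (by simpa [abs_of_pos hx₀] using hzero 0 k.zero_le)

lemma one_div_mem_multipleZeros_zero (hα : 0 < α) : 1 / (1 + α) ∈ multipleZeros α 0 := by
  refine ⟨by positivity, by rw [div_lt_one (by positivity)]; linarith, _,
    memF_one_sub_geometric hα.le, fun j hj => ?_⟩
  rw [Nat.le_zero.1 hj, iteratedDeriv_zero, Fsum_one_sub_geometric_one_div hα]

theorem multipleZeros_nonempty (hα : 0 < α) (k : ℕ) : (multipleZeros α k).Nonempty := by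
  obtain ⟨M, hM⟩ := exists_nat_gt (2 ^ (k + 1) / α)
  have hM₀ : (0 : ℝ) < M := lt_of_le_of_lt (by positivity) hM
  have hsmall (n : ℕ) (hn : 1 ≤ n) : |(averagedPow (k + 1) M).coeff n| < α :=
    (abs_coeff_averagedPow_le _ M (Nat.one_le_iff_ne_zero.1 hn)).trans_lt
      ((div_lt_comm₀ hα hM₀).1 hM)
  have hmem := eventually_memF_coeff_comp
    (coeff_zero_averagedPow (k + 1) (Nat.cast_pos.1 hM₀).ne') hsmall
  obtain ⟨b, hb, hb₁ : 1 < b⟩ :=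
    ((hmem.filter_mono nhdsWithin_le_nhds).and (self_mem_nhdsWithin (s := Ioi 1))).exists
  have hb₀ : 0 < b := one_pos.trans hb₁
  exact ⟨1 / b, one_div_pos.2 hb₀, (div_lt_one hb₀).2 hb₁, _, hb, fun j hj =>
    iteratedDeriv_Fsum_coeff_comp_eq_zero hb₀.ne' (X_sub_one_pow_dvd_averagedPow (k + 1) M)
      (Nat.lt_succ_of_le hj)⟩

lemma isCompact_setOf_iteratedDeriv_Fsum_eq_zero {S : Set (ℝ × (ℕ → ℝ))} {C : ℝ} (k : ℕ)
    (hS : IsCompact S) (hr : r < 1) (hSr : S ⊆ Icc (-r) r ×ˢ {a | ∀ n, |a n| ≤ C}) :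
    IsCompact {q ∈ S | ∀ j ≤ k, iteratedDeriv j (Fsum q.2) q.1 = 0} := by
  have hcont : ContinuousOn
      (fun (q : ℝ × (ℕ → ℝ)) (j : Iic k) => iteratedDeriv j (Fsum q.2) q.1) S :=
    continuousOn_pi.2 fun j => (continuousOn_iteratedDeriv_Fsum j hr).mono hSr
  have hpreimage : {q ∈ S | ∀ j ≤ k, iteratedDeriv j (Fsum q.2) q.1 = 0} =
      S ∩ (fun (q : ℝ × (ℕ → ℝ)) (j : Iic k) => iteratedDeriv j (Fsum q.2) q.1) ⁻¹' {0} := by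
    ext q
    simp [funext_iff]
  rw [hpreimage]
  exact hS.of_isClosed_subset
    (hcont.preimage_isClosed_of_isClosed hS.isClosed isClosed_singleton) inter_subset_left

theorem isCompact_multipleZeros_inter_Iic (α : ℝ) (k : ℕ) (hr : r < 1) :
    IsCompact (multipleZeros α k ∩ Iic r) := by
  rcases lt_or_ge α 0 with hα | hα
  · have hempty : multipleZeros α k = ∅ :=
      eq_empty_of_forall_notMem fun x ⟨_, _, a, ha, _⟩ => hα.not_ge ha.nonneg
    simp [hempty]
  have hpos : 0 < 1 / (1 + α) := by positivity
  have himage : multipleZeros α k ∩ Iic r =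
      Prod.fst '' {q ∈ Icc (1 / (1 + α)) r ×ˢ {a : ℕ → ℝ | memF α a} |
        ∀ j ≤ k, iteratedDeriv j (Fsum q.2) q.1 = 0} := by
    ext x
    constructor
    · rintro ⟨hx, hxr⟩
      obtain ⟨_, _, a, ha, hzero⟩ := id hx
      exact ⟨(x, a), ⟨⟨⟨one_div_le_of_mem_multipleZeros hx, hxr⟩, ha⟩, hzero⟩, rfl⟩
    · rintro ⟨⟨x, a⟩, ⟨⟨⟨hx, hxr⟩, ha⟩, hzero⟩, rfl⟩
      exact ⟨⟨hpos.trans_le hx, hxr.trans_lt hr, a, ha, hzero⟩, hxr⟩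
  rw [himage]
  have hsubset : Icc (1 / (1 + α)) r ×ˢ {a : ℕ → ℝ | memF α a} ⊆
      Icc (-r) r ×ˢ {a | ∀ n, |a n| ≤ 1 + α} := by
    rintro ⟨x, a⟩ ⟨⟨hx, hxr⟩, ha⟩
    exact ⟨⟨by linarith, hxr⟩, memF.abs_le ha⟩
  exact (isCompact_setOf_iteratedDeriv_Fsum_eq_zero k
    (isCompact_Icc.prod (isCompact_memF α)) hr hsubset).image continuous_fst

theorem rAlpha_mem_multipleZeros (hα : 0 < α) (k : ℕ) : rAlpha α k ∈ multipleZeros α k := by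
  obtain ⟨x₀, hx₀⟩ := multipleZeros_nonempty hα k
  obtain ⟨m, ⟨hm, hmx₀⟩, hmin⟩ :=
    (isCompact_multipleZeros_inter_Iic α k hx₀.2.1).exists_isLeast ⟨x₀, hx₀, self_mem_Iic⟩
  have hleast : IsLeast (multipleZeros α k) m := by
    refine ⟨hm, fun x hx => ?_⟩
    rcases le_total x x₀ with hxx₀ | hxx₀
    · exact hmin ⟨hx, hxx₀⟩
    · exact hmx₀.trans hxx₀
  exact hleast.csInf_mem

end MultipleZeros

/-- (i) `r_α(0) = 1/(1+α)`, realized by the power series `1 - α ∑_{n≥1} xⁿ`;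
(ii) `r_α(k) ≥ 1/(1+α)` for every `k`; (iii) the infimum defining `r_α(k)` is
attained on `F_α`. -/
theorem rAlpha_basic (α : ℝ) (hα : 0 < α) :
    (rAlpha α 0 = 1 / (1 + α) ∧
      memF α (fun n : ℕ => if n = 0 then 1 else -α) ∧
      Fsum (fun n : ℕ => if n = 0 then 1 else -α) (1 / (1 + α)) = 0) ∧
    (∀ k : ℕ, 1 / (1 + α) ≤ rAlpha α k) ∧
    (∀ k : ℕ, ∃ a : ℕ → ℝ, memF α a ∧
      ∀ j : ℕ, j ≤ k → iteratedDeriv j (Fsum a) (rAlpha α k) = 0) := by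
  have hmem (k : ℕ) := rAlpha_mem_multipleZeros hα k
  have hlower (k : ℕ) : 1 / (1 + α) ≤ rAlpha α k := one_div_le_of_mem_multipleZeros (hmem k)
  have hupper : rAlpha α 0 ≤ 1 / (1 + α) :=
    csInf_le ⟨0, fun _ hx => hx.1.le⟩ (one_div_mem_multipleZeros_zero hα)
  exact ⟨⟨hupper.antisymm (hlower 0), memF_one_sub_geometric hα.le,
    Fsum_one_sub_geometric_one_div hα⟩, hlower, fun k => (hmem k).2.2⟩
end
end
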